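/- arXiv:2405.16660 — 2 statements merged into one kernel-verified Lean document; each statement's English description precedes it below -/
import Mathlib

section
/- There exists ε > 0 such that for every real t with |t| < ε, the series Σ_{n≥0} Δ_n (2t)^n converges (HasSum) with sum equal to (1/2) · 1/√((1−t)(1−2t)(2t²+t+1)) − (1/2) · 1/(1−t), where √ is the real square root. -/
/-!
The sum is computed by a first-step analysis. Let `signSum n c w` be the sum of
`sign (w + B - A)` over the `n` flips following a flip `c`, the score starting at `w`. A leading
tail never scores, so `c_B(n) - c_A(n) = signSum n false 0`, and conditioning on the next flip gives
(`signSum_succ_false`, `signSum_succ_true`)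

* `signSum (n+1) T w = signSum n T w + signSum n H w`,
* `signSum (n+1) H w = signSum n T (w+1) + signSum n H (w-1)`.

Hence the generating functions `U_c(w) = ∑ signSum n c w * t^n` satisfy
`U_T(w) = sign w + t (U_T(w) + U_H(w))` and `U_H(w) = sign w + t U_T(w+1) + t U_H(w-1)`.
For `|t| < 1/2` the right-hand side is a contraction on bounded functions of `(c, w)`, so any
bounded solution is the generating function: `hasSum_of_bounded_solution`.

A bounded solution is explicit. Away from `w = 0` it is the constant `±1/(1-2t)` plus a multiple
of `y ^ w`, where `y` is a root of `t² y² - (1-t) y + t (1-t) = 0`: the small root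
`y = (1 - t - S) / (2 t²)` for `w > 0`, and the large root for `w < 0`, with
`S² = (1-t)² - 4t³(1-t) = (1-t)(1-2t)(2t²+t+1)`. Matching at `w = 0` determines the
multiples, and the value at `(T, 0)` is `1/(2S) - 1/(2(1-t))`.
-/

/-- Bob's score: number of indices `i < n-1` with `s i = H` and `s (i+1) = T`
    (`true` = heads). -/
def bobScore {n : ℕ} (s : Fin n → Bool) : ℕ :=
  (Finset.univ.filter (fun i : Fin (n - 1) =>
    s ⟨i.1, lt_of_lt_of_le i.2 (Nat.sub_le n 1)⟩ = true ∧
    s ⟨i.1 + 1, Nat.add_lt_of_lt_sub i.2⟩ = false)).card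

/-- Alice's score: number of indices `i < n-1` with `s i = H` and `s (i+1) = H`. -/
def aliceScore {n : ℕ} (s : Fin n → Bool) : ℕ :=
  (Finset.univ.filter (fun i : Fin (n - 1) =>
    s ⟨i.1, lt_of_lt_of_le i.2 (Nat.sub_le n 1)⟩ = true ∧
    s ⟨i.1 + 1, Nat.add_lt_of_lt_sub i.2⟩ = true)).card

/-- Number of length-`n` coin sequences where Bob's score strictly exceeds Alice's. -/
def cB (n : ℕ) : ℕ :=
  (Finset.univ.filter (fun s : Fin n → Bool => aliceScore s < bobScore s)).card

/-- Number of length-`n` coin sequences where Alice's score strictly exceeds Bob's. -/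
def cA (n : ℕ) : ℕ :=
  (Finset.univ.filter (fun s : Fin n → Bool => bobScore s < aliceScore s)).card

/-- `Δ_n = (c_B(n) - c_A(n)) / 2^n`, as a real number. -/
noncomputable def Δ (n : ℕ) : ℝ := ((cB n : ℝ) - (cA n : ℝ)) / 2 ^ n

/-- Sum over all `s` of length `n` of the sign of `w` plus Bob's score minus Alice's score of the
sequence `c, s`. -/
noncomputable def signSum (n : ℕ) (c : Bool) (w : ℤ) : ℝ :=
  ∑ s : Fin n → Bool,
    (((w + bobScore (Fin.cons c s : Fin (n + 1) → Bool)
        - aliceScore (Fin.cons c s : Fin (n + 1) → Bool)).sign : ℤ) : ℝ)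

lemma bobScore_cons_cons {n : ℕ} (c d : Bool) (s : Fin n → Bool) :
    bobScore (Fin.cons c (Fin.cons d s : Fin (n + 1) → Bool) : Fin (n + 2) → Bool)
      = (if c = true ∧ d = false then 1 else 0)
        + bobScore (Fin.cons d s : Fin (n + 1) → Bool) := by
  exact Fin.card_filter_univ_succ' (n := n) fun i : Fin (n + 1) =>
    (Fin.cons c (Fin.cons d s : Fin (n + 1) → Bool) : Fin (n + 2) → Bool) i.castSucc = true ∧
    (Fin.cons c (Fin.cons d s : Fin (n + 1) → Bool) : Fin (n + 2) → Bool) i.succ = false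

lemma aliceScore_cons_cons {n : ℕ} (c d : Bool) (s : Fin n → Bool) :
    aliceScore (Fin.cons c (Fin.cons d s : Fin (n + 1) → Bool) : Fin (n + 2) → Bool)
      = (if c = true ∧ d = true then 1 else 0)
        + aliceScore (Fin.cons d s : Fin (n + 1) → Bool) := by
  exact Fin.card_filter_univ_succ' (n := n) fun i : Fin (n + 1) =>
    (Fin.cons c (Fin.cons d s : Fin (n + 1) → Bool) : Fin (n + 2) → Bool) i.castSucc = true ∧
    (Fin.cons c (Fin.cons d s : Fin (n + 1) → Bool) : Fin (n + 2) → Bool) i.succ = true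

lemma bobScore_cons_false {n : ℕ} (s : Fin n → Bool) :
    bobScore (Fin.cons false s : Fin (n + 1) → Bool) = bobScore s := by
  cases n with
  | zero => simp [bobScore]
  | succ n =>
    rw [← Fin.cons_self_tail s, bobScore_cons_cons]
    simp

lemma aliceScore_cons_false {n : ℕ} (s : Fin n → Bool) :
    aliceScore (Fin.cons false s : Fin (n + 1) → Bool) = aliceScore s := by
  cases n with
  | zero => simp [aliceScore]
  | succ n =>
    rw [← Fin.cons_self_tail s, aliceScore_cons_cons]
    simp

lemma signSum_zero (c : Bool) (w : ℤ) : signSum 0 c w = (w.sign : ℝ) := by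
  simp [signSum, bobScore, aliceScore]

lemma sum_fin_succ_bool {n : ℕ} (f : (Fin (n + 1) → Bool) → ℝ) :
    ∑ s, f s = ∑ s : Fin n → Bool, f (Fin.cons false s)
      + ∑ s : Fin n → Bool, f (Fin.cons true s) := by
  rw [← (Fin.consEquiv (fun _ : Fin (n + 1) => Bool)).sum_comp, Fintype.sum_prod_type,
    Fintype.sum_bool, add_comm]
  rfl

lemma signSum_succ_false (n : ℕ) (w : ℤ) :
    signSum (n + 1) false w = signSum n false w + signSum n true w := by
  simp only [signSum, sum_fin_succ_bool, bobScore_cons_false, aliceScore_cons_false]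

lemma signSum_succ_true (n : ℕ) (w : ℤ) :
    signSum (n + 1) true w = signSum n false (w + 1) + signSum n true (w - 1) := by
  simp only [signSum, sum_fin_succ_bool, bobScore_cons_cons, aliceScore_cons_cons]
  congr 1 <;> refine Finset.sum_congr rfl fun s _ => ?_ <;> congr 2 <;> simp <;> ring

lemma cB_sub_cA (n : ℕ) : (cB n : ℝ) - (cA n : ℝ) = signSum n false 0 := by
  simp only [cB, cA, signSum, Finset.card_filter, bobScore_cons_false, aliceScore_cons_false]
  push_cast
  rw [← Finset.sum_sub_distrib]
  refine Finset.sum_congr rfl fun s _ => ?_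
  rcases lt_trichotomy (aliceScore s) (bobScore s) with h | h | h
  · rw [Int.sign_eq_one_of_pos (by omega)]
    simp [h, h.le]
  · simp [h]
  · rw [Int.sign_eq_neg_one_of_neg (by omega)]
    simp [h, h.le]

lemma Δ_mul_pow (n : ℕ) (t : ℝ) : Δ n * (2 * t) ^ n = signSum n false 0 * t ^ n := by
  rw [Δ, cB_sub_cA, mul_pow]
  field_simp

/-- After subtracting the first `N` terms of the series, a solution of the first-step equations
bounded by `C` leaves a remainder of size at most `C (2|t|)^N`. -/
lemma remainder_bound {t C : ℝ} {V : Bool → ℤ → ℝ} (hC : ∀ c w, |V c w| ≤ C)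
    (hT : ∀ w, V false w = w.sign + t * (V false w + V true w))
    (hH : ∀ w, V true w = w.sign + t * (V false (w + 1) + V true (w - 1))) (N : ℕ) :
    ∀ c w, |V c w - ∑ n ∈ Finset.range N, signSum n c w * t ^ n| ≤ C * (2 * |t|) ^ N := by
  induction N with
  | zero => simpa using hC
  | succ N ih =>
    have key : ∀ a b : ℝ, |a| ≤ C * (2 * |t|) ^ N → |b| ≤ C * (2 * |t|) ^ N →
        |t * (a + b)| ≤ C * (2 * |t|) ^ (N + 1) := by
      intro a b ha hb
      rw [abs_mul]
      calc |t| * |a + b| ≤ |t| * (C * (2 * |t|) ^ N + C * (2 * |t|) ^ N) := by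
            gcongr
            exact (abs_add_le a b).trans (add_le_add ha hb)
        _ = C * (2 * |t|) ^ (N + 1) := by ring
    rintro (_ | _) w
    · convert key _ _ (ih false w) (ih true w) using 2
      rw [Finset.sum_range_succ', signSum_zero]
      conv_lhs => rw [hT w]
      simp only [signSum_succ_false, add_mul, Finset.sum_add_distrib, pow_succ, ← mul_assoc,
        ← Finset.sum_mul]
      ring
    · convert key _ _ (ih false (w + 1)) (ih true (w - 1)) using 2
      rw [Finset.sum_range_succ', signSum_zero]
      conv_lhs => rw [hH w]
      simp only [signSum_succ_true, add_mul, Finset.sum_add_distrib, pow_succ, ← mul_assoc,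
        ← Finset.sum_mul]
      ring

lemma abs_signSum_le (n : ℕ) (c : Bool) (w : ℤ) : |signSum n c w| ≤ 2 ^ n := by
  refine (Finset.abs_sum_le_sum_abs _ _).trans ?_
  calc _ ≤ ∑ _s : Fin n → Bool, (1 : ℝ) := by
        refine Finset.sum_le_sum fun s _ => ?_
        rcases Int.sign_trichotomy (w + bobScore (Fin.cons c s : Fin (n + 1) → Bool)
          - aliceScore (Fin.cons c s : Fin (n + 1) → Bool)) with h | h | h <;> simp [h]
    _ = 2 ^ n := by simp

/-- A bounded solution of the first-step equations is the generating function of `signSum`. -/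
lemma hasSum_of_bounded_solution {t C : ℝ} (ht : |t| < 1 / 2) {V : Bool → ℤ → ℝ}
    (hC : ∀ c w, |V c w| ≤ C)
    (hT : ∀ w, V false w = w.sign + t * (V false w + V true w))
    (hH : ∀ w, V true w = w.sign + t * (V false (w + 1) + V true (w - 1))) (c : Bool) (w : ℤ) :
    HasSum (fun n => signSum n c w * t ^ n) (V c w) := by
  have h0 : 0 ≤ 2 * |t| := by positivity
  have h1 : 2 * |t| < 1 := by linarith
  have hs : Summable fun n => signSum n c w * t ^ n := by
    refine Summable.of_norm_bounded (summable_geometric_of_lt_one h0 h1) fun n => ?_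
    rw [Real.norm_eq_abs, abs_mul, abs_pow, mul_pow]
    gcongr
    exact abs_signSum_le n c w
  rw [hs.hasSum_iff_tendsto_nat, tendsto_iff_dist_tendsto_zero]
  refine squeeze_zero (fun _ => dist_nonneg) (fun N => ?_)
    (by simpa using (tendsto_pow_atTop_nhds_zero_of_lt_one h0 h1).const_mul C)
  rw [dist_comm, Real.dist_eq]
  exact remainder_bound hC hT hH N c w

/-- The explicit solution of the first-step equations, as a function of the last flip and the
current score. Here `y` is the small root of the characteristic equation, `r = t y / (1 - t)` is the
inverse of the large root (so nothing is divided by `t`), `α = 1 / (1 - 2t)`, and `t * c` is the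
value after a tail at score `0`; the remaining coefficients come from matching at score `0`. -/
noncomputable def explicitSol (t y r α c : ℝ) : Bool → ℤ → ℝ
  | false, Int.ofNat 0 => t * c
  | false, Int.ofNat (k + 1) => α + (c - α / (1 - t)) * t * y ^ (k + 1)
  | false, Int.negSucc k => -α + (t * c + α) * r ^ (k + 1)
  | true, Int.ofNat k => α + (c - α / (1 - t)) * (1 - t) * y ^ k
  | true, Int.negSucc k => -α + y * (t * c + α) * r ^ k

lemma explicitSol_bounded {t y r α c : ℝ} (hy : |y| ≤ 1) (hr : |r| ≤ 1) :
    ∃ C, ∀ b w, |explicitSol t y r α c b w| ≤ C := by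
  have key : ∀ (a m z : ℝ) (k : ℕ), |z| ≤ 1 → |a + m * z ^ k| ≤ |a| + |m| := by
    intro a m z k hz
    refine (abs_add_le _ _).trans ?_
    rw [abs_mul, abs_pow]
    have := mul_le_mul_of_nonneg_left (pow_le_one₀ (n := k) (abs_nonneg z) hz) (abs_nonneg m)
    linarith
  refine ⟨|t * c| + (|α| + |(c - α / (1 - t)) * t|) + (|α| + |t * c + α|)
    + (|α| + |(c - α / (1 - t)) * (1 - t)|) + (|α| + |y * (t * c + α)|), ?_⟩
  have h1 := abs_nonneg (t * c)
  have h2 := abs_nonneg α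
  have h3 := abs_nonneg ((c - α / (1 - t)) * t)
  have h4 := abs_nonneg (t * c + α)
  have h5 := abs_nonneg ((c - α / (1 - t)) * (1 - t))
  have h6 := abs_nonneg (y * (t * c + α))
  rintro (_ | _) (k | k)
  · rcases k with _ | k
    · simp only [explicitSol]
      linarith
    · have := key α ((c - α / (1 - t)) * t) y (k + 1) hy
      simp only [explicitSol]
      linarith
  · have := key (-α) (t * c + α) r (k + 1) hr
    rw [abs_neg] at this
    simp only [explicitSol]
    linarith
  · have := key α ((c - α / (1 - t)) * (1 - t)) y k hy
    simp only [explicitSol]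
    linarith
  · have := key (-α) (y * (t * c + α)) r k hr
    rw [abs_neg] at this
    simp only [explicitSol]
    linarith

lemma explicitSol_false {t y r α c : ℝ} (h1 : 1 - t ≠ 0) (hα : α * (1 - 2 * t) = 1)
    (hr : r * (1 - t) = t * y) (w : ℤ) :
    explicitSol t y r α c false w
      = w.sign + t * (explicitSol t y r α c false w + explicitSol t y r α c true w) := by
  have ha : (c - α / (1 - t)) * (1 - t) = c * (1 - t) - α := by field_simp
  rcases w with (_ | k) | k
  · have hs : (Int.ofNat 0).sign = 0 := rfl
    simp only [explicitSol, hs, pow_zero, mul_one, ha]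
    push_cast
    ring
  · have hs : (Int.ofNat (k + 1)).sign = 1 := rfl
    simp only [explicitSol, hs]
    push_cast
    linear_combination hα
  · have hs : (Int.negSucc k).sign = -1 := rfl
    simp only [explicitSol, hs]
    push_cast
    linear_combination -hα + (t * c + α) * r ^ k * hr

lemma explicitSol_true {t y r α c : ℝ} (h1 : 1 - t ≠ 0) (hα : α * (1 - 2 * t) = 1)
    (hr : r * (1 - t) = t * y) (hy : t ^ 2 * y ^ 2 - (1 - t) * y + t * (1 - t) = 0)
    (hc : c * (1 - t - 2 * t ^ 2 * y) * (1 - t) = t * y) (w : ℤ) :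
    explicitSol t y r α c true w
      = w.sign + t * (explicitSol t y r α c false (w + 1)
          + explicitSol t y r α c true (w - 1)) := by
  have ha : (c - α / (1 - t)) * (1 - t) = c * (1 - t) - α := by field_simp
  -- The characteristic equation, with `t y = (1 - t) r` substituted in its quadratic term.
  have hyr : y = t + t * y * r := by
    apply mul_right_cancel₀ h1
    linear_combination -hy - t * y * hr
  rcases w with (_ | k) | k
  · have e1 : (Int.ofNat 0) + 1 = Int.ofNat (0 + 1) := rfl
    have e2 : (Int.ofNat 0) - 1 = Int.negSucc 0 := rfl
    have hs : (Int.ofNat 0).sign = 0 := rfl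
    rw [e1, e2, hs]
    simp only [explicitSol]
    push_cast
    field_simp
    linear_combination hc - t * y * hα
  · have e1 : (Int.ofNat (k + 1)) + 1 = Int.ofNat (k + 1 + 1) := rfl
    have e2 : (Int.ofNat (k + 1)) - 1 = Int.ofNat k := by
      simp
    have hs : (Int.ofNat (k + 1)).sign = 1 := rfl
    rw [e1, e2, hs]
    simp only [explicitSol]
    push_cast
    linear_combination hα - (c - α / (1 - t)) * y ^ k * hy
  · have e2 : (Int.negSucc k) - 1 = Int.negSucc (k + 1) := rfl
    have hs : (Int.negSucc k).sign = -1 := rfl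
    -- The two formulas for `false` agree at score `0`.
    have e1 : explicitSol t y r α c false (Int.negSucc k + 1) = -α + (t * c + α) * r ^ k := by
      rcases k with _ | k
      · have : Int.negSucc 0 + 1 = Int.ofNat 0 := rfl
        rw [this]
        simp [explicitSol]
      · have : Int.negSucc (k + 1) + 1 = Int.negSucc k := rfl
        rw [this]
        simp only [explicitSol]
    rw [e1, e2, hs]
    simp only [explicitSol]
    push_cast
    linear_combination -hα + (t * c + α) * r ^ k * hyr

/-- For all `t` in a neighborhood of `0`, the series `Σ Δ_n (2t)^n` converges to
    `(1/2)/√((1-t)(1-2t)(2t²+t+1)) - (1/2)/(1-t)`. -/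
theorem hasSum_delta_generating_function :
    ∃ ε > (0 : ℝ), ∀ t : ℝ, |t| < ε →
      HasSum (fun n : ℕ => Δ n * (2 * t) ^ n)
        (1 / 2 * (1 / Real.sqrt ((1 - t) * (1 - 2 * t) * (2 * t ^ 2 + t + 1))) -
          1 / 2 * (1 / (1 - t))) := by
  refine ⟨1 / 4, by norm_num, fun t ht => ?_⟩
  obtain ⟨hlo, hhi⟩ := abs_lt.mp ht
  simp only [Δ_mul_pow]
  set S := Real.sqrt ((1 - t) * (1 - 2 * t) * (2 * t ^ 2 + t + 1)) with hS
  have hD : 0 < (1 - t) * (1 - 2 * t) * (2 * t ^ 2 + t + 1) :=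
    mul_pos (mul_pos (by linarith) (by linarith)) (by nlinarith)
  have hS0 : 0 < S := Real.sqrt_pos.mpr hD
  have hSS : S ^ 2 = (1 - t) * (1 - 2 * t) * (2 * t ^ 2 + t + 1) := Real.sq_sqrt hD.le
  have h1 : 0 < 1 - t := by linarith
  have h1S : 0 < 1 - t + S := by linarith
  -- The small root `(1 - t - S) / (2 t²)`, rationalised so that it makes sense at `t = 0`.
  set y := 2 * t * (1 - t) / (1 - t + S) with hy
  set r := t * y / (1 - t) with hr
  have hyS : y * (1 - t + S) = 2 * t * (1 - t) := by rw [hy]; field_simp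
  have hr' : r * (1 - t) = t * y := by rw [hr]; field_simp
  have hroot : 1 - t - 2 * t ^ 2 * y = S := by
    apply mul_right_cancel₀ h1S.ne'
    linear_combination -2 * t ^ 2 * hyS - hSS
  have hquad : t ^ 2 * y ^ 2 - (1 - t) * y + t * (1 - t) = 0 := by
    linear_combination -(1 / 2) * hyS - (1 / 2) * y * hroot
  have hyt : |y| ≤ 2 * |t| := by
    rw [hy, abs_div, abs_of_pos h1S, div_le_iff₀ h1S, abs_mul, abs_mul, abs_of_pos h1, abs_two]
    have := mul_nonneg (abs_nonneg t) hS0.le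
    nlinarith
  have hy1 : |y| ≤ 1 := by linarith
  have hr1 : |r| ≤ 1 := by
    rw [hr, abs_div, abs_of_pos h1, div_le_iff₀ h1, abs_mul]
    nlinarith [abs_nonneg t, abs_nonneg y]
  have hα : 1 / (1 - 2 * t) * (1 - 2 * t) = 1 := div_mul_cancel₀ _ (by linarith)
  have hc : t * y / (S * (1 - t)) * (1 - t - 2 * t ^ 2 * y) * (1 - t) = t * y := by
    rw [hroot]; field_simp
  obtain ⟨C, hC⟩ := explicitSol_bounded (t := t) (α := 1 / (1 - 2 * t))
    (c := t * y / (S * (1 - t))) hy1 hr1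
  convert hasSum_of_bounded_solution (by linarith) hC (explicitSol_false h1.ne' hα hr')
    (explicitSol_true h1.ne' hα hr' hquad hc) false 0 using 1
  change _ = t * (t * y / (S * (1 - t)))
  field_simp
  linear_combination hroot
end

section
/- The difference Δ_n satisfies the asymptotic expansion Δ_n = 1/(2√(πn)) + O(n^{−3/2}); precisely, the function n ↦ Δ_n − 1/(2√(π·n)) is big-O of n ↦ n^{−3/2} as n → ∞. -/
/-!
Write `a n = ∑ C(2k, k) C(n - 2k, k)` (`tieCount`). The proof rests on the exact identity
`2 (cB n - cA n) + 1 = a n` (`two_mul_cB_sub_cA`). A further flip changes the sign of the score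
difference only for sequences that end in heads and whose scores differ by at most one, so
`cB - cA` doubles up to a correction that counts the sequences ending in heads with the scores
exactly one apart (`cB_sub_cA_succ`). These counts are products of two binomial coefficients
(`scoreCount_formula`), and Pascal's rule gives the same recurrence for `a` (`tieCount_succ_succ`).

The generating function of `a` is
`((1 - X) (1 - X - 4X³))^(-1/2) = (1 - 2X)^(-1/2) (1 + X² - 2X³)^(-1/2)` (`tieCount_series`).
The second factor `H` (`regSeries`) satisfies a first-order differential equation, whose recurrence
bounds its coefficients by `(8/5)ⁿ` (`abs_coeff_regSeries_le`). Hence `q n = [Xⁿ] H / 2ⁿ` decays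
geometrically, and `∑ q n = H(1/2) = 1` (`tsum_regCoeff`).

With `b n = C(2n, n) / 4ⁿ`, this reads `a n / 2ⁿ = ∑ q k * b (n - k)`. Since
`|b (n - k) - b n| ≤ (k + 1)³ (n + 1)^(-3/2)` (`abs_shift_le`) and `q` decays geometrically,
`a n / 2ⁿ = b n + O(n^(-3/2))`. Finally `b n = 1 / √(πn) + O(n^(-3/2))` by the bounds on the Wallis
product, and `Δ n = (a n / 2ⁿ - 1 / 2ⁿ) / 2`.
-/

open scoped Real

/-! ### Counting sequences by their scores -/

/-- Whether the last flip is heads. The empty sequence counts as not ending in heads, so that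
appending a first flip scores for nobody. -/
def lastHead {n : ℕ} (s : Fin n → Bool) : Bool :=
  match n, s with
  | 0, _ => false
  | m + 1, s => s (Fin.last m)

/-- Splits a sum over sequences of length `n + 1` according to the last flip. -/
theorem sum_snoc {M : Type*} [AddCommMonoid M] (n : ℕ) (F : (Fin (n + 1) → Bool) → M) :
    ∑ s, F s = ∑ s : Fin n → Bool,
      (F (Fin.snoc (α := fun _ => Bool) s true) + F (Fin.snoc (α := fun _ => Bool) s false)) := by
  rw [← (Fin.snocEquiv (fun _ : Fin (n + 1) => Bool)).sum_comp, Fintype.sum_prod_type,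
    Fintype.sum_bool, ← Finset.sum_add_distrib]
  rfl

theorem lastHead_snoc {n : ℕ} (s : Fin n → Bool) (c : Bool) :
    lastHead (Fin.snoc (α := fun _ => Bool) s c) = c := by
  simp [lastHead]

theorem snoc_lt {n : ℕ} (s : Fin n → Bool) (c : Bool) (i : ℕ) (h : i < n) :
    (Fin.snoc (α := fun _ => Bool) s c : Fin (n + 1) → Bool) ⟨i, by omega⟩ = s ⟨i, h⟩ := by
  simp [Fin.snoc, h]

theorem snoc_eq {n : ℕ} (s : Fin n → Bool) (c : Bool) :
    (Fin.snoc (α := fun _ => Bool) s c : Fin (n + 1) → Bool) ⟨n, by omega⟩ = c := by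
  simp [Fin.snoc]

theorem bobScore_snoc {n : ℕ} (s : Fin n → Bool) (c : Bool) :
    bobScore (Fin.snoc (α := fun _ => Bool) s c) =
      bobScore s + if lastHead s = true ∧ c = false then 1 else 0 := by
  cases n with
  | zero => simp [bobScore, lastHead]
  | succ m =>
    unfold bobScore
    rw [Finset.card_filter, Finset.card_filter]
    change ∑ i : Fin (m + 1), _ = _
    rw [Fin.sum_univ_castSucc]
    congr 1
    · refine Finset.sum_congr rfl fun i _ => ?_
      simp only [Fin.val_castSucc]
      simp only [snoc_lt s c i.1 (by omega), snoc_lt s c (i.1 + 1) (by omega)]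
    · simp only [Fin.val_last]
      simp only [snoc_lt s c m (by omega), snoc_eq s c]
      rfl

theorem aliceScore_snoc {n : ℕ} (s : Fin n → Bool) (c : Bool) :
    aliceScore (Fin.snoc (α := fun _ => Bool) s c) =
      aliceScore s + if lastHead s = true ∧ c = true then 1 else 0 := by
  cases n with
  | zero => simp [aliceScore, lastHead]
  | succ m =>
    unfold aliceScore
    rw [Finset.card_filter, Finset.card_filter]
    change ∑ i : Fin (m + 1), _ = _
    rw [Fin.sum_univ_castSucc]
    congr 1
    · refine Finset.sum_congr rfl fun i _ => ?_
      simp only [Fin.val_castSucc]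
      simp only [snoc_lt s c i.1 (by omega), snoc_lt s c (i.1 + 1) (by omega)]
    · simp only [Fin.val_last]
      simp only [snoc_lt s c m (by omega), snoc_eq s c]
      rfl

/-- The number of sequences of length `n` that end in heads iff `l = true`, with Bob's score `b`
and Alice's score `a`. -/
def scoreCount (n : ℕ) (l : Bool) (b a : ℕ) : ℕ :=
  ∑ s : Fin n → Bool, if lastHead s = l ∧ bobScore s = b ∧ aliceScore s = a then 1 else 0

theorem scoreCount_zero (l : Bool) (b a : ℕ) :
    scoreCount 0 l b a = if l = false ∧ b = 0 ∧ a = 0 then 1 else 0 := by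
  simp [scoreCount, lastHead, bobScore, aliceScore, eq_comm (a := 0), eq_comm (a := false)]

theorem scoreCount_true_zero (n b : ℕ) :
    scoreCount (n + 1) true b 0 = scoreCount n false b 0 := by
  unfold scoreCount
  rw [sum_snoc]
  refine Finset.sum_congr rfl fun s _ => ?_
  simp only [lastHead_snoc, bobScore_snoc, aliceScore_snoc]
  cases lastHead s <;> simp

theorem scoreCount_true_succ (n b a : ℕ) :
    scoreCount (n + 1) true b (a + 1) =
      scoreCount n false b (a + 1) + scoreCount n true b a := by
  unfold scoreCount
  rw [sum_snoc, ← Finset.sum_add_distrib]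
  refine Finset.sum_congr rfl fun s _ => ?_
  simp only [lastHead_snoc, bobScore_snoc, aliceScore_snoc]
  cases lastHead s <;> simp

theorem scoreCount_false_zero (n a : ℕ) :
    scoreCount (n + 1) false 0 a = scoreCount n false 0 a := by
  unfold scoreCount
  rw [sum_snoc]
  refine Finset.sum_congr rfl fun s _ => ?_
  simp only [lastHead_snoc, bobScore_snoc, aliceScore_snoc]
  cases lastHead s <;> simp

theorem scoreCount_false_succ (n b a : ℕ) :
    scoreCount (n + 1) false (b + 1) a =
      scoreCount n false (b + 1) a + scoreCount n true b a := by
  unfold scoreCount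
  rw [sum_snoc, ← Finset.sum_add_distrib]
  refine Finset.sum_congr rfl fun s _ => ?_
  simp only [lastHead_snoc, bobScore_snoc, aliceScore_snoc]
  cases lastHead s <;> simp

/-- The closed form of `scoreCount`. A sequence ending in tails with Bob's score `b` has `b` runs
of heads (of total length `a + b`), which gives the first factor as a number of compositions; the
second factor counts the ways to choose the lengths of the runs of tails. For sequences ending in
heads there are `b + 1` runs of heads. The side conditions `if … ≤ n` express that the sequence
is long enough, and keep the truncated subtractions from taking junk values. -/
theorem scoreCount_formula (n : ℕ) :
    (∀ a, scoreCount n false 0 a = if a = 0 then 1 else 0) ∧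
    (∀ b a, scoreCount n false (b + 1) a =
      if a + 2 * b + 2 ≤ n then (a + b).choose b * (n - a - b - 1).choose (b + 1) else 0) ∧
    (∀ b a, scoreCount n true b a =
      if a + 2 * b + 1 ≤ n then (a + b).choose b * (n - 1 - a - b).choose b else 0) := by
  induction n with
  | zero => simp [scoreCount_zero]
  | succ n ih =>
    obtain ⟨h0, h1, h2⟩ := ih
    refine ⟨fun a => by rw [scoreCount_false_zero, h0], fun b a => ?_, fun b a => ?_⟩
    · rw [scoreCount_false_succ, h1, h2]
      by_cases h : a + 2 * b + 1 ≤ n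
      · obtain ⟨m, rfl⟩ := Nat.exists_eq_add_of_le h
        have e1 : a + 2 * b + 1 + m - 1 - a - b = b + m := by omega
        have e2 : a + 2 * b + 1 + m + 1 - a - b - 1 = b + m + 1 := by omega
        have e3 : a + 2 * b + 1 + m - a - b - 1 = b + m := by omega
        rw [e1, e2, e3, if_pos h, if_pos (show a + 2 * b + 2 ≤ a + 2 * b + 1 + m + 1 by omega),
          Nat.choose_succ_succ (b + m) b]
        split_ifs with h'
        · ring
        · obtain rfl : m = 0 := by omega
          simp
      · rw [if_neg (by omega), if_neg h, if_neg (by omega)]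
    · cases a with
      | zero =>
        rw [scoreCount_true_zero]
        cases b with
        | zero => simp [h0]
        | succ b =>
          rw [h1]
          simp only [zero_add, Nat.choose_self, one_mul]
          split_ifs with h h' h'
          · congr 1
          all_goals omega
      | succ a =>
        rw [scoreCount_true_succ, h2]
        cases b with
        | zero => simp [h0]
        | succ b =>
          rw [h1]
          by_cases h : a + 2 * b + 3 ≤ n
          · rw [if_pos (by omega), if_pos (by omega), if_pos (by omega)]
            have e1 : n - (a + 1) - b - 1 = n - 1 - a - (b + 1) := by omega
            have e2 : n + 1 - 1 - (a + 1) - (b + 1) = n - 1 - a - (b + 1) := by omega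
            have e3 : a + 1 + b = a + (b + 1) := by omega
            have e4 : a + 1 + (b + 1) = (a + (b + 1)) + 1 := by omega
            rw [e1, e2, e3, e4, Nat.choose_succ_succ (a + (b + 1)) b]
            ring
          · rw [if_neg (by omega), if_neg (by omega), if_neg (by omega)]

theorem bobScore_le {n : ℕ} (s : Fin n → Bool) : bobScore s ≤ n := by
  refine (Finset.card_filter_le _ _).trans ?_
  simp

theorem aliceScore_le {n : ℕ} (s : Fin n → Bool) : aliceScore s ≤ n := by
  refine (Finset.card_filter_le _ _).trans ?_
  simp

/-- One more flip changes the sign of (Bob's score) - (Alice's score) only for sequences that end in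
heads and whose two scores differ by at most one. The contributions of a tie cancel, a sequence in
which Alice leads by one turns into a tie for one of the two outcomes, and similarly for Bob. -/
theorem cB_sub_cA_succ (n : ℕ) :
    (cB (n + 1) : ℤ) - cA (n + 1) = 2 * ((cB n : ℤ) - cA n) +
      ∑ k ∈ Finset.range (n + 1),
        ((scoreCount n true k (k + 1) : ℤ) - scoreCount n true (k + 1) k) := by
  have e1 : ∀ s : Fin n → Bool, ∑ k ∈ Finset.range (n + 1),
      (if lastHead s = true ∧ bobScore s = k ∧ aliceScore s = k + 1 then (1 : ℤ) else 0) =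
      if lastHead s = true ∧ aliceScore s = bobScore s + 1 then 1 else 0 := by
    intro s
    rw [Finset.sum_eq_single (bobScore s)]
    · simp
    · intro k _ hk
      exact if_neg fun h => hk h.2.1.symm
    · intro h
      exact absurd (Finset.mem_range.2 (Nat.lt_succ_of_le (bobScore_le s))) h
  have e2 : ∀ s : Fin n → Bool, ∑ k ∈ Finset.range (n + 1),
      (if lastHead s = true ∧ bobScore s = k + 1 ∧ aliceScore s = k then (1 : ℤ) else 0) =
      if lastHead s = true ∧ bobScore s = aliceScore s + 1 then 1 else 0 := by
    intro s
    rw [Finset.sum_eq_single (aliceScore s)]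
    · simp
    · intro k _ hk
      exact if_neg fun h => hk h.2.2.symm
    · intro h
      exact absurd (Finset.mem_range.2 (Nat.lt_succ_of_le (aliceScore_le s))) h
  unfold cB cA scoreCount
  simp only [Finset.card_filter]
  push_cast
  rw [Finset.sum_sub_distrib, Finset.sum_comm (s := Finset.range (n + 1)),
    Finset.sum_comm (s := Finset.range (n + 1))]
  simp only [e1, e2]
  rw [sum_snoc, sum_snoc, ← Finset.sum_sub_distrib, ← Finset.sum_sub_distrib,
    ← Finset.sum_sub_distrib, Finset.mul_sum, ← Finset.sum_add_distrib]
  refine Finset.sum_congr rfl fun s _ => ?_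
  simp only [bobScore_snoc, aliceScore_snoc]
  cases lastHead s
  · simp only [Bool.false_eq_true, false_and, if_false, add_zero]
    ring
  · simp only [true_and, if_true, Bool.true_eq_false, Bool.false_eq_true, if_false, add_zero]
    split_ifs <;> omega

/-- The number `∑ C(2k, k) C(n - 2k, k)`, which by `scoreCount_formula` is the number of sequences
of length `n + 1` that end in heads and have equal scores. For `n < 3k` the truncated difference is
less than `k`, so such terms vanish. -/
def tieCount (n : ℕ) : ℕ :=
  ∑ k ∈ Finset.range (n + 1), k.centralBinom * (n - 2 * k).choose k

theorem tieCount_eq_sum (n N : ℕ) (h : n ≤ N) :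
    tieCount n = 1 + ∑ k ∈ Finset.range N,
      (k + 1).centralBinom * (n - 2 * (k + 1)).choose (k + 1) := by
  unfold tieCount
  rw [Finset.sum_range_succ', add_comm]
  congr 1
  · simp
  · refine Finset.sum_subset (by simpa using h) fun k _ hk => ?_
    rw [Finset.mem_range, not_lt] at hk
    rw [Nat.choose_eq_zero_of_lt (by omega), mul_zero]

/-- By Pascal's rule, `tieCount` satisfies the recurrence that `cB_sub_cA_succ` gives for
`2 (cB - cA) + 1`. -/
theorem tieCount_succ_succ (m : ℕ) :
    (tieCount (m + 2) : ℤ) = 2 * tieCount (m + 1) - 1 + 2 * ∑ k ∈ Finset.range (m + 2),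
        ((scoreCount (m + 1) true k (k + 1) : ℤ) - scoreCount (m + 1) true (k + 1) k) := by
  rw [tieCount_eq_sum (m + 2) (m + 2) le_rfl, tieCount_eq_sum (m + 1) (m + 2) (by omega)]
  push_cast
  have : ∀ x y z : ℤ, x = 2 * y + 2 * z → 1 + x = 2 * (1 + y) - 1 + 2 * z := by
    intro x y z h; rw [h]; ring
  apply this
  rw [Finset.mul_sum, Finset.mul_sum, ← Finset.sum_add_distrib]
  refine Finset.sum_congr rfl fun k _ => ?_
  rw [(scoreCount_formula (m + 1)).2.2, (scoreCount_formula (m + 1)).2.2]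
  have hc : (k + 1).centralBinom = 2 * (2 * k + 1).choose k := by
    have h1 : (k + 1).centralBinom = (2 * k + 1 + 1).choose (k + 1) := by
      rw [Nat.centralBinom]; congr 1
    rw [h1, Nat.choose_succ_succ, Nat.choose_symm_half]; ring
  have hc' : (2 * k + 1).choose (k + 1) = (2 * k + 1).choose k := Nat.choose_symm_half k
  have s1 : k + 1 + k = 2 * k + 1 := by ring
  have s2 : k + (k + 1) = 2 * k + 1 := by ring
  rw [hc, s1, s2, hc']
  by_cases h : 2 * k + 1 ≤ m
  · obtain ⟨r, rfl⟩ := Nat.exists_eq_add_of_le h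
    have e1 : 2 * k + 1 + r + 2 - 2 * (k + 1) = r + 1 := by omega
    have e2 : 2 * k + 1 + r + 1 - 2 * (k + 1) = r := by omega
    have e3 : 2 * k + 1 + r + 1 - 1 - (k + 1) - k = r := by omega
    have e4 : 2 * k + 1 + r + 1 - 1 - k - (k + 1) = r := by omega
    rw [e1, e2, e3, e4, Nat.choose_succ_succ]
    have f1 : (if k + 1 + 2 * k + 1 ≤ 2 * k + 1 + r + 1 then
        (2 * k + 1).choose k * r.choose k else 0) = (2 * k + 1).choose k * r.choose k := by
      split_ifs
      · rfl
      · rw [Nat.choose_eq_zero_of_lt (show r < k by omega), mul_zero]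
    have f2 : (if k + 2 * (k + 1) + 1 ≤ 2 * k + 1 + r + 1 then
        (2 * k + 1).choose k * r.choose (k + 1) else 0) =
        (2 * k + 1).choose k * r.choose (k + 1) := by
      split_ifs
      · rfl
      · rw [Nat.choose_eq_zero_of_lt (show r < k + 1 by omega), mul_zero]
    rw [f1, f2]
    push_cast
    ring
  · rw [if_neg (by omega), if_neg (by omega),
      Nat.choose_eq_zero_of_lt (show m + 2 - 2 * (k + 1) < k + 1 by omega),
      Nat.choose_eq_zero_of_lt (show m + 1 - 2 * (k + 1) < k + 1 by omega)]
    simp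

/-- The difference of the two counts in closed form. -/
theorem two_mul_cB_sub_cA (n : ℕ) : 2 * ((cB n : ℤ) - cA n) + 1 = tieCount n := by
  induction n with
  | zero => simp [cB, cA, bobScore, aliceScore, tieCount]
  | succ n ih =>
    rw [cB_sub_cA_succ]
    cases n with
    | zero =>
      simp [scoreCount_zero, cB, cA, bobScore, aliceScore, tieCount, Finset.sum_range_succ]
    | succ m => rw [tieCount_succ_succ, ← ih]; ring

/-! ### Generating functions -/

open PowerSeries in
/-- `∑ C(2n, n) Xⁿ = (1 - 4X)^(-1/2)`, from the differential equation `c' (1 - 4X) = 2c`. -/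
theorem centralBinom_series :
    (mk fun n => (n.centralBinom : ℝ)) ^ 2 * (1 - 4 * X) = 1 := by
  set c : ℝ⟦X⟧ := mk fun n => (n.centralBinom : ℝ) with hc
  have ode : d⁄dX ℝ c * (1 - 4 * X) = 2 * c := by
    ext n
    have h4 : (4 : ℝ⟦X⟧) = C (4 : ℝ) := (map_ofNat C 4).symm
    have h2 : (2 : ℝ⟦X⟧) = C (2 : ℝ) := (map_ofNat C 2).symm
    rw [mul_sub, mul_one, mul_left_comm, h4, h2, map_sub, coeff_C_mul, coeff_C_mul,
      coeff_derivative, hc, coeff_mk, coeff_mk]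
    have key : ∀ n : ℕ, ((n : ℝ) + 1) * ((n + 1).centralBinom : ℝ) =
        2 * (2 * n + 1) * (n.centralBinom : ℝ) := fun n => by
      exact_mod_cast Nat.succ_mul_centralBinom_succ n
    cases n with
    | zero => simpa using key 0
    | succ n =>
      rw [coeff_succ_mul_X, coeff_derivative, coeff_mk]
      have := key (n + 1)
      push_cast at this ⊢
      linarith
  -- The square times `1 - 4 * X` has derivative zero and constant coefficient one.
  apply derivative.ext
  · have h4 : (4 : ℝ⟦X⟧) = C (4 : ℝ) := (map_ofNat C 4).symm
    have hd : d⁄dX ℝ (1 - 4 * X : ℝ⟦X⟧) = -4 := by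
      rw [h4]; simp [Derivation.leibniz]
    rw [Derivation.leibniz, Derivation.leibniz_pow, hd]
    simp only [smul_eq_mul, nsmul_eq_mul, Nat.cast_ofNat, Derivation.map_one_eq_zero]
    linear_combination (2 * c) * ode
  · simp [hc]

open PowerSeries in
/-- With `c = ∑ C(2k, k) Xᵏ`, the generating function of `tieCount` is
`c(X³ / (1 - X)) / (1 - X) = ((1 - X) (1 - X - 4X³))^(-1/2)`. -/
theorem tieCount_series :
    (mk fun n => (tieCount n : ℝ)) ^ 2 * ((1 - X) * (1 - X - 4 * X ^ 3)) = 1 := by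
  set c : ℝ⟦X⟧ := mk fun n => (n.centralBinom : ℝ) with hc
  set I : ℝ⟦X⟧ := mk 1 with hI
  have hI1 : I * (1 - X) = 1 := mk_one_mul_one_sub_eq_one ℝ
  have hw : HasSubst (X ^ 3 * I) := HasSubst.of_constantCoeff_zero' (by simp)
  have hcoeff : ∀ N e, e < N → coeff e (c.subst (X ^ 3 * I)) =
      ∑ k ∈ Finset.range N, (k.centralBinom : ℝ) * coeff e ((X ^ 3 * I) ^ k) := by
    intro N e he
    rw [coeff_subst' hw, finsum_eq_sum_of_support_subset]
    · exact Finset.sum_congr rfl fun k _ => by rw [hc, coeff_mk, smul_eq_mul]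
    · intro k hk
      rw [Finset.coe_range, Set.mem_Iio]
      by_contra hlt
      apply hk
      beta_reduce
      rw [mul_pow, ← pow_mul, coeff_X_pow_mul', if_neg (by omega), smul_zero]
  have hA : (mk fun n => (tieCount n : ℝ)) = c.subst (X ^ 3 * I) * I := by
    ext n
    have hsum : coeff n (c.subst (X ^ 3 * I) * I) =
        ∑ k ∈ Finset.range (n + 1), (k.centralBinom : ℝ) * coeff n ((X ^ 3 * I) ^ k * I) := by
      simp only [coeff_mul n, Finset.mul_sum]
      rw [Finset.sum_comm]
      refine Finset.sum_congr rfl fun p hp => ?_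
      rw [hcoeff (n + 1) p.1
          (by have := Finset.HasAntidiagonal.mem_antidiagonal.1 hp; omega),
        Finset.sum_mul]
      exact Finset.sum_congr rfl fun k _ => by ring
    rw [hsum, coeff_mk, tieCount]
    push_cast
    refine Finset.sum_congr rfl fun k _ => ?_
    rw [mul_pow, ← pow_mul, mul_assoc, ← pow_succ, coeff_X_pow_mul', hI,
      mk_one_pow_eq_mk_choose_add, coeff_mk]
    congr 1
    split_ifs with h
    · congr 2
      omega
    · rw [Nat.choose_eq_zero_of_lt (by omega), Nat.cast_zero]
  have hF : (c.subst (X ^ 3 * I)) ^ 2 * (1 - 4 * (X ^ 3 * I)) = 1 := by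
    have := congrArg (substAlgHom hw) centralBinom_series
    rw [map_mul, map_pow, map_sub, map_mul, map_one, map_ofNat, substAlgHom_X] at this
    simpa only [coe_substAlgHom] using this
  rw [hA]
  linear_combination ((I * (1 - X)) ^ 2) * hF + (I * (1 - X) + 1 +
    (c.subst (X ^ 3 * I)) ^ 2 * I * (4 * X ^ 3 * I * (1 - X))) * hI1

/-! ### The regular factor of the generating function -/

/-- The regular factor `H = (1 + X² - 2X³)^(-1/2)` in the factorisation `A = (1 - 2X)^(-1/2) H` of
the generating function `A` of `tieCount`. It is defined as `A (1 - 2X)^(1/2)`, with the square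
root written as `(1 - 2X) (1 - 2X)^(-1/2)`. -/
noncomputable def regSeries : PowerSeries ℝ :=
  open PowerSeries in
  (mk fun n => (tieCount n : ℝ)) *
    ((1 - 2 * X) * rescale (1 / 2 : ℝ) (mk fun n => (n.centralBinom : ℝ)))

open PowerSeries in
theorem rescale_centralBinom :
    (rescale (1 / 2 : ℝ) (mk fun n => (n.centralBinom : ℝ))) ^ 2 * (1 - 2 * X) = 1 := by
  have h := congrArg (rescale (1 / 2 : ℝ)) centralBinom_series
  rw [map_mul, map_pow, map_sub, map_mul, map_one, map_ofNat, rescale_X] at h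
  rw [← h]
  congr 2
  rw [show (4 : ℝ⟦X⟧) = C (4 : ℝ) from (map_ofNat C 4).symm,
    show (2 : ℝ⟦X⟧) = C (2 : ℝ) from (map_ofNat C 2).symm, ← mul_assoc, ← map_mul]
  norm_num

open PowerSeries in
theorem regSeries_mul : regSeries * rescale (1 / 2 : ℝ) (mk fun n => (n.centralBinom : ℝ)) =
    mk fun n => (tieCount n : ℝ) := by
  rw [regSeries]
  linear_combination (mk fun n => (tieCount n : ℝ)) * rescale_centralBinom

open PowerSeries in
/-- This rests on `(1 - X) (1 - X - 4X³) = (1 - 2X) (1 + X² - 2X³)`. -/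
theorem regSeries_sq : regSeries ^ 2 * (1 + X ^ 2 - 2 * X ^ 3) = 1 := by
  set A : ℝ⟦X⟧ := mk fun n => (tieCount n : ℝ) with hA
  have h1 := tieCount_series
  have h2 := rescale_centralBinom
  have h3 := regSeries_mul
  rw [← hA] at h1 h3
  rw [regSeries, ← hA]
  linear_combination (A ^ 2 * (1 - 2 * X) * (1 + X ^ 2 - 2 * X ^ 3)) * h2 + h1

open PowerSeries in
/-- The logarithmic derivative of `H² (1 + X² - 2X³) = 1`. -/
theorem regSeries_ode : d⁄dX ℝ regSeries * (1 + X ^ 2 - 2 * X ^ 3) +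
    regSeries * (X - 3 * X ^ 2) = 0 := by
  have h := congrArg (d⁄dX ℝ) regSeries_sq
  have hne : regSeries ≠ 0 := by
    intro h0
    have := regSeries_sq
    rw [h0] at this
    simp at this
  have h2 : (2 : ℝ⟦X⟧) = C (2 : ℝ) := (map_ofNat C 2).symm
  have hd : d⁄dX ℝ (1 + X ^ 2 - 2 * X ^ 3 : ℝ⟦X⟧) = 2 * X - 6 * X ^ 2 := by
    rw [h2]
    simp only [map_sub, map_add, Derivation.leibniz, Derivation.leibniz_pow, derivative_C,
      derivative_X, Derivation.map_one_eq_zero, smul_eq_mul, nsmul_eq_mul]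
    rw [← h2]
    push_cast
    ring
  rw [Derivation.leibniz, Derivation.leibniz_pow, hd, Derivation.map_one_eq_zero] at h
  simp only [smul_eq_mul, nsmul_eq_mul, Nat.cast_ofNat] at h
  have h2' : (2 : ℝ⟦X⟧) ≠ 0 := by
    rw [h2, Ne, map_eq_zero_iff _ C_injective]; norm_num
  apply mul_left_cancel₀ (mul_ne_zero h2' hne)
  rw [mul_zero, ← h]
  ring

open PowerSeries in
/-- The coefficient of `X^(n+3)` in `regSeries_ode`. -/
theorem regSeries_rec (n : ℕ) : ((n : ℝ) + 4) * coeff (n + 4) regSeries =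
    -((n : ℝ) + 3) * coeff (n + 2) regSeries + (2 * n + 5) * coeff (n + 1) regSeries := by
  have h := congrArg (coeff (n + 3)) regSeries_ode
  have e : d⁄dX ℝ regSeries * (1 + X ^ 2 - 2 * X ^ 3) + regSeries * (X - 3 * X ^ 2) =
      d⁄dX ℝ regSeries + d⁄dX ℝ regSeries * X ^ 2 - C 2 * (d⁄dX ℝ regSeries * X ^ 3)
      + regSeries * X - C 3 * (regSeries * X ^ 2) := by
    rw [show (C (2 : ℝ)) = (2 : ℝ⟦X⟧) from map_ofNat C 2,
      show (C (3 : ℝ)) = (3 : ℝ⟦X⟧) from map_ofNat C 3]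
    ring
  rw [e] at h
  simp only [map_add, map_sub, coeff_C_mul, map_zero, coeff_derivative] at h
  rw [show n + 3 = (n + 1) + 2 from rfl, coeff_mul_X_pow, coeff_mul_X_pow,
    show (n + 1) + 2 = n + 3 from rfl, coeff_mul_X_pow, show n + 3 = (n + 2) + 1 from rfl,
    coeff_succ_mul_X, coeff_derivative, coeff_derivative] at h
  push_cast at h
  linear_combination h

open PowerSeries in
theorem regSeries_initial : coeff 0 regSeries = 1 ∧ coeff 1 regSeries = 0 ∧
    coeff 2 regSeries = -1 / 2 ∧ coeff 3 regSeries = 1 := by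
  have e : d⁄dX ℝ regSeries * (1 + X ^ 2 - 2 * X ^ 3) + regSeries * (X - 3 * X ^ 2) =
      d⁄dX ℝ regSeries + d⁄dX ℝ regSeries * X ^ 2 - C 2 * (d⁄dX ℝ regSeries * X ^ 3)
      + regSeries * X - C 3 * (regSeries * X ^ 2) := by
    rw [show (C (2 : ℝ)) = (2 : ℝ⟦X⟧) from map_ofNat C 2,
      show (C (3 : ℝ)) = (3 : ℝ⟦X⟧) from map_ofNat C 3]
    ring
  have h := regSeries_ode
  rw [e] at h
  have c0 : coeff 0 regSeries = 1 := by
    have hc : constantCoeff (rescale (1 / 2 : ℝ) (mk fun n => (n.centralBinom : ℝ))) = 1 := by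
      rw [← coeff_zero_eq_constantCoeff_apply, coeff_rescale]
      simp
    rw [regSeries, coeff_zero_eq_constantCoeff_apply, map_mul, map_mul, hc]
    simp [tieCount]
  have k0 := congrArg (coeff 0) h
  have k1 := congrArg (coeff 1) h
  have k2 := congrArg (coeff 2) h
  simp only [map_add, map_sub, coeff_C_mul, map_zero, coeff_derivative, coeff_mul_X_pow',
    coeff_zero_mul_X] at k0 k1 k2
  rw [show coeff 1 (regSeries * X) = coeff 0 regSeries from coeff_succ_mul_X 0 _] at k1
  rw [show coeff 2 (regSeries * X) = coeff 1 regSeries from coeff_succ_mul_X 1 _] at k2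
  norm_num at k0 k1 k2
  have c0' : constantCoeff regSeries = 1 := by simpa using c0
  rw [c0'] at k1 k2
  refine ⟨c0, k0, by linarith, by linarith⟩

open PowerSeries in
/-- The radius of convergence of `H` exceeds `1 / 2`. The induction on `regSeries_rec` goes through
because `(n + 3) (8/5) + (2n + 5) ≤ (n + 4) (8/5)³`. -/
theorem abs_coeff_regSeries_le (n : ℕ) : |coeff n regSeries| ≤ (8 / 5 : ℝ) ^ n := by
  obtain ⟨h0, h1, h2, h3⟩ := regSeries_initial
  induction n using Nat.strong_induction_on with
  | _ n ih =>
    match n, ih with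
    | 0, _ => rw [h0]; norm_num
    | 1, _ => rw [h1]; norm_num
    | 2, _ => rw [h2]; norm_num [abs_div]
    | 3, _ => rw [h3]; norm_num
    | n + 4, ih =>
      have i1 := ih (n + 1) (by omega)
      have i2 := ih (n + 2) (by omega)
      have hn : (0 : ℝ) < (n : ℝ) + 4 := by positivity
      have hp : (0 : ℝ) < (8 / 5 : ℝ) ^ (n + 1) := by positivity
      rw [← mul_le_mul_iff_right₀ hn, ← abs_of_pos hn, ← abs_mul, abs_of_pos hn, regSeries_rec]
      have e2 : (8 / 5 : ℝ) ^ (n + 2) = 8 / 5 * (8 / 5 : ℝ) ^ (n + 1) := by ring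
      have e4 : (8 / 5 : ℝ) ^ (n + 4) = (8 / 5) ^ 3 * (8 / 5 : ℝ) ^ (n + 1) := by ring
      rw [e2] at i2
      rw [e4]
      have a1 : |-((n : ℝ) + 3) * coeff (n + 2) regSeries| ≤
          (n + 3) * (8 / 5 * (8 / 5 : ℝ) ^ (n + 1)) := by
        rw [abs_mul, abs_neg, abs_of_pos (show (0 : ℝ) < n + 3 by positivity)]
        gcongr
      have a2 : |(2 * (n : ℝ) + 5) * coeff (n + 1) regSeries| ≤
          (2 * n + 5) * (8 / 5 : ℝ) ^ (n + 1) := by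
        rw [abs_mul, abs_of_pos (show (0 : ℝ) < 2 * n + 5 by positivity)]
        gcongr
      refine (abs_add_le _ _).trans ((add_le_add a1 a2).trans ?_)
      have hn0 : (0 : ℝ) ≤ n := Nat.cast_nonneg n
      nlinarith [mul_nonneg hn0 hp.le]

/-- The coefficient of `xⁿ` in `H(x / 2)`, where `H` is `regSeries`. -/
noncomputable def regCoeff (n : ℕ) : ℝ := PowerSeries.coeff n regSeries / 2 ^ n

theorem abs_regCoeff_le (n : ℕ) : |regCoeff n| ≤ (4 / 5 : ℝ) ^ n := by
  rw [regCoeff, abs_div, abs_of_pos (show (0 : ℝ) < 2 ^ n by positivity),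
    div_le_iff₀ (by positivity), ← mul_pow]
  norm_num
  exact abs_coeff_regSeries_le n

theorem summable_abs_regCoeff : Summable fun n => |regCoeff n| :=
  Summable.of_nonneg_of_le (fun _ => abs_nonneg _) abs_regCoeff_le
    (summable_geometric_of_lt_one (by norm_num) (by norm_num))

/-- `A = H (1 - 2X)^(-1/2)` coefficientwise, after the substitution of `X / 2` for `X`. -/
theorem tieCount_div_two_pow (n : ℕ) : (tieCount n : ℝ) / 2 ^ n =
    ∑ k ∈ Finset.range (n + 1), regCoeff k * ((n - k).centralBinom / 4 ^ (n - k)) := by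
  have h := congrArg (PowerSeries.coeff n) regSeries_mul
  rw [PowerSeries.coeff_mul, PowerSeries.coeff_mk] at h
  rw [← h, Finset.sum_div, Finset.Nat.sum_antidiagonal_eq_sum_range_succ_mk]
  refine Finset.sum_congr rfl fun k hk => ?_
  obtain ⟨m, rfl⟩ := Nat.exists_eq_add_of_le (Nat.lt_succ_iff.1 (Finset.mem_range.1 hk))
  rw [PowerSeries.coeff_rescale, PowerSeries.coeff_mk, regCoeff, Nat.add_sub_cancel_left,
    show (4 : ℝ) = 2 * 2 by norm_num, mul_pow, pow_add, one_div, inv_pow]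
  field_simp

open PowerSeries in
/-- Evaluation of real power series is multiplicative at points of absolute convergence. -/
theorem eval_mul {f g : ℝ⟦X⟧} {x : ℝ} (hf : Summable fun n => ‖coeff n f * x ^ n‖)
    (hg : Summable fun n => ‖coeff n g * x ^ n‖) :
    (Summable fun n => ‖coeff n (f * g) * x ^ n‖) ∧
    ∑' n, coeff n (f * g) * x ^ n = (∑' n, coeff n f * x ^ n) * ∑' n, coeff n g * x ^ n := by
  have e : ∀ n, coeff n (f * g) * x ^ n = ∑ p ∈ Finset.HasAntidiagonal.antidiagonal n,
      coeff p.1 f * x ^ p.1 * (coeff p.2 g * x ^ p.2) := by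
    intro n
    rw [coeff_mul, Finset.sum_mul]
    refine Finset.sum_congr rfl fun p hp => ?_
    rw [← Finset.HasAntidiagonal.mem_antidiagonal.1 hp, pow_add]
    ring
  simp only [e]
  exact ⟨summable_norm_sum_mul_antidiagonal_of_summable_norm
      (f := fun n => coeff n f * x ^ n) (g := fun n => coeff n g * x ^ n) hf hg,
    (tsum_mul_tsum_eq_tsum_sum_antidiagonal_of_summable_norm
      (f := fun n => coeff n f * x ^ n) (g := fun n => coeff n g * x ^ n) hf hg).symm⟩

open PowerSeries in
/-- `regSeries_sq` evaluated at `x / 2`. -/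
theorem tsum_regCoeff_mul_pow_sq {x : ℝ} (hx0 : 0 ≤ x) (hx1 : x ≤ 1) :
    (∑' n, regCoeff n * x ^ n) ^ 2 * (1 + x ^ 2 / 4 - x ^ 3 / 4) = 1 := by
  have e : ∀ n, coeff n regSeries * (x / 2) ^ n = regCoeff n * x ^ n := fun n => by
    rw [regCoeff, div_pow]; ring
  have hs : Summable fun n => ‖coeff n regSeries * (x / 2) ^ n‖ := by
    refine Summable.of_nonneg_of_le (fun _ => norm_nonneg _) (fun n => ?_) summable_abs_regCoeff
    rw [e, norm_mul, norm_pow, Real.norm_eq_abs, Real.norm_eq_abs, abs_of_nonneg hx0]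
    exact mul_le_of_le_one_right (abs_nonneg _) (pow_le_one₀ hx0 hx1)
  have hz : ∀ n, 4 ≤ n → coeff n (1 + X ^ 2 - 2 * X ^ 3 : ℝ⟦X⟧) * (x / 2) ^ n = 0 := by
    intro n hn
    rw [show (2 : ℝ⟦X⟧) = C (2 : ℝ) from (map_ofNat C 2).symm, map_sub, map_add, coeff_one,
      coeff_X_pow, coeff_C_mul, coeff_X_pow, if_neg (by omega), if_neg (by omega),
      if_neg (by omega)]
    simp
  have hp : Summable fun n => ‖coeff n (1 + X ^ 2 - 2 * X ^ 3 : ℝ⟦X⟧) * (x / 2) ^ n‖ := by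
    refine summable_of_ne_finset_zero (s := Finset.range 4) fun n hn => ?_
    rw [hz n (by simpa using hn), norm_zero]
  have hpe : ∑' n, coeff n (1 + X ^ 2 - 2 * X ^ 3 : ℝ⟦X⟧) * (x / 2) ^ n =
      1 + x ^ 2 / 4 - x ^ 3 / 4 := by
    rw [tsum_eq_sum (s := Finset.range 4) fun n hn => hz n (by simpa using hn),
      show (2 : ℝ⟦X⟧) = C (2 : ℝ) from (map_ofNat C 2).symm]
    simp only [Finset.sum_range_succ, map_sub, map_add, coeff_one, coeff_X_pow, coeff_C_mul,
      Finset.sum_range_zero]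
    norm_num
    ring
  have h2 := eval_mul hs hs
  have h3 := (eval_mul h2.1 hp).2
  rw [h2.2, hpe, ← sq, regSeries_sq] at h3
  simp only [e] at h3
  rw [sq, ← h3, tsum_eq_single 0]
  · simp
  · intro n hn
    simp [coeff_one, hn]

/-- `H(1/2) = 1`. Since `H(1/2)² = 1`, only the sign is in question: `H` is continuous and nowhere
zero on `[0, 1/2]`, and `H(0) = 1`. -/
theorem tsum_regCoeff : ∑' n, regCoeff n = 1 := by
  have hcont : ContinuousOn (fun x : ℝ => ∑' n, regCoeff n * x ^ n) (Set.Icc 0 1) := by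
    refine continuousOn_tsum (fun n => by fun_prop) summable_abs_regCoeff fun n x hx => ?_
    rw [norm_mul, norm_pow, Real.norm_eq_abs, Real.norm_eq_abs, abs_of_nonneg hx.1]
    exact mul_le_of_le_one_right (abs_nonneg _) (pow_le_one₀ hx.1 hx.2)
  have h1 : (∑' n, regCoeff n) ^ 2 = 1 := by
    simpa using tsum_regCoeff_mul_pow_sq zero_le_one le_rfl
  have h0 : ∑' n, regCoeff n * (0 : ℝ) ^ n = 1 := by
    rw [tsum_eq_single 0 fun n hn => by simp [hn]]
    simp [regCoeff, regSeries_initial.1]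
  rcases eq_or_eq_neg_of_sq_eq_sq _ 1 (h1.trans (one_pow 2).symm) with h | h
  · exact h
  · exfalso
    -- If the sum were `-1`, the series would vanish somewhere on `[0, 1]`.
    have hivt := intermediate_value_Icc' zero_le_one hcont
    have hm : (0 : ℝ) ∈ Set.Icc (∑' n, regCoeff n * (1 : ℝ) ^ n)
        (∑' n, regCoeff n * (0 : ℝ) ^ n) := by
      rw [h0]
      simp [h]
    obtain ⟨x, hx, hx0⟩ := hivt hm
    have := tsum_regCoeff_mul_pow_sq hx.1 hx.2
    simp only at hx0
    rw [hx0] at this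
    simp at this

/-! ### Central binomial probabilities and the asymptotic expansion -/

/-- The probability `C(2n, n) / 4ⁿ` of as many heads as tails in `2n` flips. -/
noncomputable def centralProb (n : ℕ) : ℝ := n.centralBinom / 4 ^ n

theorem centralProb_zero : centralProb 0 = 1 := by simp [centralProb]

theorem centralProb_pos (n : ℕ) : 0 < centralProb n :=
  div_pos (by exact_mod_cast n.centralBinom_pos) (by positivity)

theorem centralProb_succ (n : ℕ) :
    centralProb (n + 1) = centralProb n * ((2 * n + 1) / (2 * n + 2)) := by
  have h : ((n : ℝ) + 1) * ((n + 1).centralBinom : ℝ) =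
      2 * (2 * n + 1) * (n.centralBinom : ℝ) := by
    exact_mod_cast Nat.succ_mul_centralBinom_succ n
  have hn : (n : ℝ) + 1 ≠ 0 := by positivity
  rw [centralProb, centralProb, pow_succ]
  field_simp
  linear_combination 2 * h

theorem centralProb_le_one (n : ℕ) : centralProb n ≤ 1 := by
  rw [centralProb, div_le_one (by positivity)]
  exact_mod_cast n.centralBinom_le_four_pow

/-- `centralProb` in terms of the Wallis product, whose convergence to `π / 2` Mathlib provides with
explicit bounds. -/
theorem centralProb_sq_mul_W (n : ℕ) :
    centralProb n ^ 2 * (2 * n + 1) * Real.Wallis.W n = 1 := by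
  induction n with
  | zero => simp [centralProb_zero, Real.Wallis.W]
  | succ n ih =>
    refine Eq.trans ?_ ih
    rw [centralProb_succ, Real.Wallis.W_succ]
    push_cast
    field_simp
    ring

theorem centralProb_sq_mul_succ_le_one (n : ℕ) : centralProb n ^ 2 * (n + 1) ≤ 1 := by
  induction n with
  | zero => simp [centralProb_zero]
  | succ n ih =>
    refine le_trans ?_ ih
    rw [centralProb_succ, mul_pow, mul_assoc]
    refine mul_le_mul_of_nonneg_left ?_ (sq_nonneg _)
    rw [div_pow, div_mul_eq_mul_div, div_le_iff₀ (by positivity)]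
    push_cast
    have : (0 : ℝ) ≤ n := n.cast_nonneg
    nlinarith

theorem centralProb_le (n : ℕ) : centralProb n ≤ 1 / √((n : ℝ) + 1) := by
  rw [le_div_iff₀ (by positivity)]
  refine (pow_le_pow_iff_left₀ (mul_nonneg (centralProb_pos n).le (Real.sqrt_nonneg _))
    zero_le_one two_ne_zero).1 ?_
  rw [mul_pow, Real.sq_sqrt (by positivity), one_pow]
  exact centralProb_sq_mul_succ_le_one n

/-- The error rate `(n + 1)^(-3/2)`, with the shift keeping it positive at `n = 0`. -/
noncomputable def rate (n : ℕ) : ℝ := 1 / (((n : ℝ) + 1) * √((n : ℝ) + 1))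

theorem rate_pos (n : ℕ) : 0 < rate n := by unfold rate; positivity

theorem rate_antitone : Antitone rate := by
  intro m n h
  have h' : (m : ℝ) ≤ n := by exact_mod_cast h
  unfold rate
  gcongr

theorem rate_le (m k : ℕ) : rate m ≤ ((k : ℝ) + 1) ^ 2 * rate (m + k) := by
  have hm : (0 : ℝ) ≤ m := m.cast_nonneg
  have hk : (0 : ℝ) ≤ k := k.cast_nonneg
  have h1 : ((m + k : ℕ) : ℝ) + 1 ≤ (k + 1) * (m + 1) := by push_cast; nlinarith
  have h2 : √(((m + k : ℕ) : ℝ) + 1) ≤ (k + 1) * √((m : ℝ) + 1) := by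
    apply Real.sqrt_le_iff.2 ⟨by positivity, ?_⟩
    rw [mul_pow, Real.sq_sqrt (by positivity)]
    nlinarith [mul_nonneg hk (mul_nonneg (show (0 : ℝ) ≤ k + 1 by positivity)
      (show (0 : ℝ) ≤ m + 1 by positivity))]
  unfold rate
  rw [mul_one_div, div_le_div_iff₀ (by positivity) (by positivity), one_mul]
  calc _ ≤ ((k : ℝ) + 1) * (m + 1) * ((k + 1) * √((m : ℝ) + 1)) := by gcongr
    _ = _ := by ring

theorem centralProb_sub_succ (n : ℕ) :
    0 ≤ centralProb n - centralProb (n + 1) ∧ centralProb n - centralProb (n + 1) ≤ rate n := by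
  have e : centralProb n - centralProb (n + 1) = centralProb n / (2 * n + 2) := by
    rw [centralProb_succ]; field_simp; ring
  have hp := centralProb_pos n
  rw [e]
  refine ⟨by positivity, ?_⟩
  have h := centralProb_le n
  calc centralProb n / (2 * n + 2) ≤ centralProb n / (n + 1) :=
        div_le_div_of_nonneg_left hp.le (by positivity)
          (by linarith [(n.cast_nonneg : (0 : ℝ) ≤ n)])
    _ ≤ 1 / √((n : ℝ) + 1) / (n + 1) := by gcongr
    _ = rate n := by unfold rate; rw [div_div, mul_comm]

theorem centralProb_sub_add (m k : ℕ) : 0 ≤ centralProb m - centralProb (m + k) ∧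
    centralProb m - centralProb (m + k) ≤ k * rate m := by
  induction k with
  | zero => simp
  | succ k ih =>
    have h := centralProb_sub_succ (m + k)
    have hr := rate_antitone (Nat.le_add_right m k)
    rw [← add_assoc]
    push_cast
    constructor <;> linarith

/-- Shifting the index of `centralProb` by `k`, with value zero at negative indices, costs
`(k + 1)³ (n + 1)^(-3/2)`, uniformly in `k`. -/
theorem abs_shift_le (n k : ℕ) :
    |(if k ≤ n then centralProb (n - k) else 0) - centralProb n| ≤
      ((k : ℝ) + 1) ^ 3 * rate n := by
  have hk : (0 : ℝ) ≤ k := k.cast_nonneg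
  split_ifs with h
  · obtain ⟨m, rfl⟩ := Nat.exists_eq_add_of_le' h
    rw [Nat.add_sub_cancel]
    obtain ⟨h1, h2⟩ := centralProb_sub_add m k
    rw [abs_of_nonneg h1]
    refine h2.trans ((mul_le_mul_of_nonneg_left (rate_le m k) hk).trans ?_)
    rw [← mul_assoc]
    refine mul_le_mul_of_nonneg_right ?_ (rate_pos _).le
    nlinarith [sq_nonneg ((k : ℝ) + 1)]
  · rw [zero_sub, abs_neg, abs_of_pos (centralProb_pos n)]
    refine (centralProb_le_one n).trans ?_
    have hr := rate_le 0 n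
    have h0 : rate 0 = 1 := by simp [rate]
    rw [h0, zero_add] at hr
    refine hr.trans (mul_le_mul_of_nonneg_right ?_ (rate_pos _).le)
    have hnk : (n : ℝ) ≤ k := by exact_mod_cast (not_le.1 h).le
    calc ((n : ℝ) + 1) ^ 2 ≤ ((k : ℝ) + 1) ^ 2 := by gcongr
      _ ≤ ((k : ℝ) + 1) ^ 3 := pow_le_pow_right₀ (by linarith) (by norm_num)

theorem summable_weighted : Summable fun k : ℕ => |regCoeff k| * ((k : ℝ) + 1) ^ 3 := by
  have h := (summable_nat_add_iff (f := fun k : ℕ => (k : ℝ) ^ 3 * (4 / 5 : ℝ) ^ k) 1).2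
    (summable_pow_mul_geometric_of_norm_lt_one 3 (show ‖(4 / 5 : ℝ)‖ < 1 by norm_num))
  refine Summable.of_nonneg_of_le (fun k => by positivity) (fun k => ?_) (h.mul_left (5 / 4))
  calc |regCoeff k| * ((k : ℝ) + 1) ^ 3 ≤ (4 / 5) ^ k * ((k : ℝ) + 1) ^ 3 := by
        gcongr; exact abs_regCoeff_le k
    _ = _ := by push_cast; ring

/-- `tieCount n / 2ⁿ = ∑ q_k b_{n-k}` is compared termwise with `∑ q_k b_n = b_n`, where `q` is
`regCoeff` and `b` is `centralProb`. -/
theorem abs_tieCount_sub_le (n : ℕ) : |(tieCount n : ℝ) / 2 ^ n - centralProb n| ≤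
    (∑' k, |regCoeff k| * ((k : ℝ) + 1) ^ 3) * rate n := by
  have e1 : (tieCount n : ℝ) / 2 ^ n =
      ∑' k, regCoeff k * (if k ≤ n then centralProb (n - k) else 0) := by
    rw [tieCount_div_two_pow, tsum_eq_sum (s := Finset.range (n + 1))]
    · refine Finset.sum_congr rfl fun k hk => ?_
      rw [if_pos (Nat.lt_succ_iff.1 (Finset.mem_range.1 hk)), centralProb]
    · intro k hk
      rw [if_neg (by simpa [Nat.lt_succ_iff] using hk), mul_zero]
  have s1 : Summable fun k => regCoeff k * (if k ≤ n then centralProb (n - k) else 0) := by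
    refine summable_of_ne_finset_zero (s := Finset.range (n + 1)) fun k hk => ?_
    rw [if_neg (by simpa [Nat.lt_succ_iff] using hk), mul_zero]
  have s2 : Summable fun k => regCoeff k * centralProb n :=
    summable_abs_regCoeff.of_abs.mul_right _
  have e2 : centralProb n = ∑' k, regCoeff k * centralProb n := by
    rw [tsum_mul_right, tsum_regCoeff, one_mul]
  have hb : ∀ k, ‖regCoeff k * (if k ≤ n then centralProb (n - k) else 0) -
      regCoeff k * centralProb n‖ ≤ |regCoeff k| * ((k : ℝ) + 1) ^ 3 * rate n := by
    intro k
    rw [← mul_sub, Real.norm_eq_abs, abs_mul, mul_assoc]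
    exact mul_le_mul_of_nonneg_left (abs_shift_le n k) (abs_nonneg _)
  conv_lhs => rw [e1, e2, ← s1.tsum_sub s2]
  rw [← tsum_mul_right]
  exact tsum_of_norm_bounded (summable_weighted.mul_right _).hasSum hb

/-- Stirling's estimate for the central binomial coefficient, in explicit form. -/
theorem abs_centralProb_sub_le (n : ℕ) (hn : 1 ≤ n) :
    |centralProb n - 1 / √(π * n)| ≤ 1 / (n * √n) := by
  have hn' : (1 : ℝ) ≤ n := by exact_mod_cast hn
  have hn0 : (0 : ℝ) < n := by linarith
  have hpi := Real.pi_pos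
  set b := centralProb n with hb
  set c := 1 / √(π * n) with hc
  have hb0 : 0 < b := centralProb_pos n
  have hc0 : 0 < c := by positivity
  have hc2 : c ^ 2 * (π * n) = 1 := by
    rw [hc, div_pow, Real.sq_sqrt (by positivity), one_pow]
    field_simp
  have hW := centralProb_sq_mul_W n
  rw [← hb] at hW
  have hW1 := Real.Wallis.W_le n
  have hW2 := Real.Wallis.le_W n
  have hq : 0 < b ^ 2 * (2 * n + 1) := by positivity
  -- Mathlib's bounds on the Wallis product, multiplied by `b ^ 2 * (2 * n + 1)`.
  have hlow : 2 ≤ b ^ 2 * (2 * n + 1) * π := by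
    have := mul_le_mul_of_nonneg_left hW1 hq.le
    linarith
  have hup : b ^ 2 * (2 * n + 1) ^ 2 * π ≤ 4 * (n + 1) := by
    have := mul_le_mul_of_nonneg_left hW2 hq.le
    rw [hW, div_mul_div_comm, mul_div_assoc', div_le_one (by positivity)] at this
    linarith
  have hbc : b ≤ c := by
    refine (pow_le_pow_iff_left₀ hb0.le hc0.le two_ne_zero).1 ?_
    have h1 : b ^ 2 * ((2 * n + 1) ^ 2 * π) ≤ c ^ 2 * ((2 * n + 1) ^ 2 * π) := by
      have : c ^ 2 * ((2 * n + 1) ^ 2 * π) * n = (2 * n + 1) ^ 2 := by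
        linear_combination (2 * (n : ℝ) + 1) ^ 2 * hc2
      have h3 : b ^ 2 * ((2 * n + 1) ^ 2 * π) * n ≤ c ^ 2 * ((2 * n + 1) ^ 2 * π) * n := by
        rw [this]; nlinarith
      exact le_of_mul_le_mul_right h3 hn0
    exact le_of_mul_le_mul_right h1 (by positivity)
  rw [abs_sub_comm, abs_of_nonneg (sub_nonneg.2 hbc)]
  have hdiff : (c - b) * n ≤ c := by
    have h1 : (c ^ 2 - b ^ 2) * n ≤ c ^ 2 := by
      have : (c ^ 2 - b ^ 2) * n * ((2 * n + 1) * π) ≤ c ^ 2 * ((2 * n + 1) * π) := by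
        nlinarith [sq_nonneg c, mul_pos (pow_pos hc0 2) hpi]
      exact le_of_mul_le_mul_right this (by positivity)
    have h2 : ((c - b) * n) * c ≤ c * c := by
      have : 0 ≤ (c - b) * n * b := by
        have := sub_nonneg.2 hbc
        positivity
      nlinarith
    exact le_of_mul_le_mul_right h2 hc0
  have hcn : c ≤ 1 / √n := by
    rw [hc]
    gcongr
    nlinarith [Real.pi_gt_three]
  rw [mul_comm (n : ℝ), ← div_div, le_div_iff₀ hn0]
  exact hdiff.trans hcn

theorem inv_two_pow_le (n : ℕ) (hn : 1 ≤ n) : 1 / 2 ^ n ≤ 3 * (1 / ((n : ℝ) * √n)) := by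
  have h : ∀ n : ℕ, n ^ 2 + 2 * n + 3 ≤ 3 * 2 ^ n := by
    intro n
    induction n with
    | zero => simp
    | succ n ih => rw [pow_succ 2 n]; nlinarith
  have h' : (n : ℝ) ^ 2 + 2 * n + 3 ≤ 3 * 2 ^ n := by exact_mod_cast h n
  have hn' : (1 : ℝ) ≤ n := by exact_mod_cast hn
  have hs : √(n : ℝ) ≤ n := by
    rw [Real.sqrt_le_left (by linarith)]
    nlinarith
  rw [mul_one_div, div_le_div_iff₀ (by positivity) (by positivity)]
  nlinarith

theorem rpow_neg_three_halves (n : ℕ) (hn : 1 ≤ n) :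
    (n : ℝ) ^ (-(3 : ℝ) / 2) = 1 / (n * √n) := by
  have hn0 : (0 : ℝ) < n := by exact_mod_cast hn
  rw [show (-(3 : ℝ) / 2) = -(1 + 1 / 2) by norm_num, Real.rpow_neg hn0.le, Real.rpow_add hn0,
    Real.rpow_one, ← Real.sqrt_eq_rpow, one_div]

theorem Δ_eq (n : ℕ) : Δ n = ((tieCount n : ℝ) / 2 ^ n - 1 / 2 ^ n) / 2 := by
  have h : 2 * ((cB n : ℝ) - cA n) + 1 = tieCount n := by exact_mod_cast two_mul_cB_sub_cA n
  rw [Δ, ← h]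
  ring

/-- Asymptotics: `Δ_n = 1/(2√(πn)) + O(n^(-3/2))`. -/
theorem delta_asymptotic :
    (fun n : ℕ => Δ n - 1 / (2 * Real.sqrt (π * n))) =O[Filter.atTop]
      (fun n : ℕ => (n : ℝ) ^ (-(3 : ℝ) / 2)) := by
  set K := ∑' k, |regCoeff k| * ((k : ℝ) + 1) ^ 3 with hK
  have hK0 : 0 ≤ K := tsum_nonneg fun k => by positivity
  refine Asymptotics.IsBigO.of_bound (K + 4) ?_
  filter_upwards [Filter.eventually_ge_atTop 1] with n hn
  have hn0 : (0 : ℝ) < n := by exact_mod_cast hn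
  rw [rpow_neg_three_halves n hn, Real.norm_eq_abs, Real.norm_eq_abs]
  set r := 1 / ((n : ℝ) * √n) with hr
  have hr0 : 0 < r := by positivity
  rw [abs_of_pos hr0]
  have h1 := abs_tieCount_sub_le n
  have h2 := abs_centralProb_sub_le n hn
  have h3 := inv_two_pow_le n hn
  rw [← hK] at h1
  rw [← hr] at h2 h3
  have hrate : rate n ≤ r := by
    rw [hr, rate]
    gcongr <;> linarith
  have h1' := h1.trans (mul_le_mul_of_nonneg_left hrate hK0)
  have h4 : (0 : ℝ) < 1 / 2 ^ n := by positivity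
  have e : 1 / (2 * √(π * n)) = 1 / √(π * n) / 2 := by rw [mul_comm, div_div]
  rw [Δ_eq, e]
  rw [abs_le] at *
  have hKr : 0 ≤ K * r := by positivity
  constructor <;> linarith
end
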